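/- arXiv:1711.06243 — 3 statements merged into one kernel-verified Lean document; each statement's English description precedes it below -/
import Mathlib

section
/- Let a, g ∈ 𝔽_q[t] be coprime polynomials with |a| < |g|, such that g is not a constant multiple of a power of t, and let d = deg g > 0. Write the Laurent expansion of a/g at infinity as a/g = ∑_{i < 0} x_i t^i. Then for every positive integer n, the number of indices i with 1 ≤ i ≤ n and x_{−i} ≠ 0 is at least ⌊n/d⌋. -/
/-!
Write `x = a / g` and `d = deg g`. The point is that no `d` consecutive coefficients
`x_{-(k+1)}, …, x_{-(k+d)}` all vanish. If they did, then `t^k x = P + y` with `P` a polynomial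
and `|y| < q^{-d}`, so the polynomial `t^k a - P g = y g` would have absolute value `< 1` and hence
be zero. Thus `g ∣ t^k a`, and `g ∣ t^k` by coprimality, which makes `g` a constant multiple of a
power of `t`. The interval `{1, …, n}` contains `⌊n/d⌋` disjoint blocks of length `d`, and each of
them contributes at least one nonzero coefficient.
-/

/- Setting: `F` is the finite field `𝔽_q` with `q = Fintype.card F` elements.
The field `𝔽_q((1/t))` of formal Laurent series in `1/t` is modelled by
`LaurentSeries F = HahnSeries ℤ F`, where the element `t` corresponds to the
Hahn series supported at `-1`; thus the coefficient `x_i` of `t^i` in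
`x ∈ 𝔽_q((1/t))` is the Hahn series coefficient of `x` at `-i`. -/

open Polynomial

noncomputable section

attribute [local instance] Classical.propDecidable

variable (F : Type) [Field F] [Fintype F]

/-- `ψ(a) = exp(2πi·tr(a)/p)`, with `tr : 𝔽_q → 𝔽_p` the trace map. -/
def psiF (a : F) : ℂ :=
  letI : Algebra (ZMod (ringChar F)) F := ZMod.algebra F (ringChar F)
  Complex.exp (2 * Real.pi * Complex.I *
    ((Algebra.trace (ZMod (ringChar F)) F a).val : ℂ) / (ringChar F : ℂ))

/-- The element `t` of `𝔽_q((1/t))`. -/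
def tF : LaurentSeries F := HahnSeries.single (-1 : ℤ) 1

/-- Laurent expansion (at infinity) of a polynomial in `t`. -/
def toLS (f : Polynomial F) : LaurentSeries F :=
  Polynomial.eval₂ (algebraMap F (LaurentSeries F)) (tF F) f

/-- The coefficient `x_i` of `t^i` in `x ∈ 𝔽_q((1/t))`. -/
def coeffT (x : LaurentSeries F) (i : ℤ) : F := x.coeff (-i)

/-- `e_q(x) = ψ(x_{-1})`. -/
def eF (x : LaurentSeries F) : ℂ := psiF F (coeffT F x (-1))

/-- `|x| = q^j` where `j` is the largest index with `x_j ≠ 0`, and `|0| = 0`. -/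
def normT (x : LaurentSeries F) : ℝ :=
  if x = 0 then 0 else (Fintype.card F : ℝ) ^ (-x.order)

/-- `M_R(n)`: monic polynomials of degree `n` whose coefficients of degrees
`0, …, n-1` all lie outside `R`. -/
def MR (R : Finset F) (n : ℕ) : Finset (Polynomial F) :=
  ((Finset.univ : Finset (Fin n → F)).filter fun c => ∀ i, c i ∉ R).image
    fun c => X ^ n + ∑ i : Fin n, C (c i) * X ^ (i : ℕ)

/-- `S_R(x) = ∑_{m ∈ M_R(n)} e_q(m x)`. -/
def SR (R : Finset F) (n : ℕ) (x : LaurentSeries F) : ℂ :=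
  ∑ m ∈ MR F R n, eF F (toLS F m * x)

/-- All monic polynomials of degree `n`. -/
def monicD (n : ℕ) : Finset (Polynomial F) :=
  (Finset.univ : Finset (Fin n → F)).image
    fun c => X ^ n + ∑ i : Fin n, C (c i) * X ^ (i : ℕ)

/-- All polynomials of degree `< n` (including `0`). -/
def polyD (n : ℕ) : Finset (Polynomial F) :=
  (Finset.univ : Finset (Fin n → F)).image
    fun c => ∑ i : Fin n, C (c i) * X ^ (i : ℕ)

/-- Monic irreducible polynomials of degree `n`. -/
def irredD (n : ℕ) : Finset (Polynomial F) :=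
  (monicD F n).filter fun m => Irreducible m

/-- `π(n)`: the number of monic irreducible polynomials of degree `n`. -/
def piF (n : ℕ) : ℕ := (irredD F n).card

/-- `S(x) = ∑_{deg P = n} e_q(P x)`, sum over monic irreducibles of degree `n`. -/
def Sirr (n : ℕ) (x : LaurentSeries F) : ℂ :=
  ∑ m ∈ irredD F n, eF F (toLS F m * x)

/-- The Möbius function of `𝔽_q[t]`. -/
def muF (g : Polynomial F) : ℤ :=
  if Squarefree g then
    (-1) ^ (Nat.card {ω : Polynomial F // ω.Monic ∧ Irreducible ω ∧ ω ∣ g}) else 0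

/-- `φ(g)`: the number of units of `𝔽_q[t]/(g)`. -/
def phiF (g : Polynomial F) : ℕ := Nat.card (Polynomial F ⧸ Ideal.span {g})ˣ

/-- The Fourier coefficient `1̂_A(r) = ∑_{a ∈ A} ψ(a r)`. -/
def fhat (A : Finset F) (r : F) : ℂ := ∑ a ∈ A, psiF F (a * r)

theorem toLS_add (F : Type) [Field F] (f g : Polynomial F) :
    toLS F (f + g) = toLS F f + toLS F g := eval₂_add _ _

theorem toLS_sub (F : Type) [Field F] (f g : Polynomial F) :
    toLS F (f - g) = toLS F f - toLS F g := eval₂_sub _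

theorem toLS_mul (F : Type) [Field F] (f g : Polynomial F) :
    toLS F (f * g) = toLS F f * toLS F g := eval₂_mul _ _

theorem toLS_monomial (F : Type) [Field F] (k : ℕ) (c : F) :
    toLS F (monomial k c) = HahnSeries.single (-(k : ℤ)) c := by
  rw [toLS, eval₂_monomial, tF, HahnSeries.single_pow]
  have hC : algebraMap F (LaurentSeries F) c = HahnSeries.single 0 c := by
    rw [HahnSeries.algebraMap_apply', PowerSeries.algebraMap_apply]
    simp
  rw [hC, HahnSeries.single_mul_single]
  simp

theorem toLS_coeff (F : Type) [Field F] (f : Polynomial F) (n : ℤ) :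
    (toLS F f).coeff n = if n ≤ 0 then f.coeff (-n).toNat else 0 := by
  induction f using Polynomial.induction_on' with
  | add p q hp hq => rw [toLS_add, HahnSeries.coeff_add, hp, hq]; split_ifs <;> simp
  | monomial k c =>
    rw [toLS_monomial, HahnSeries.coeff_single, coeff_monomial]
    split_ifs <;> first | rfl | omega

theorem toLS_eq_zero_of_coeff (F : Type) [Field F] (f : Polynomial F)
    (h : ∀ n : ℤ, n ≤ 0 → (toLS F f).coeff n = 0) : f = 0 := by
  ext m
  have := h (-(m : ℤ)) (by omega)
  rw [toLS_coeff, if_pos (by omega)] at this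
  simpa using this

/-- Every Laurent series in `1/t` has a polynomial part. -/
theorem exists_poly_part (F : Type) [Field F] (z : LaurentSeries F) :
    ∃ P : Polynomial F, ∀ n : ℤ, n ≤ 0 → (toLS F P).coeff n = z.coeff n := by
  refine ⟨∑ i ∈ Finset.range ((-z.order).toNat + 1), monomial i (z.coeff (-(i : ℤ))), ?_⟩
  intro n hn
  rw [toLS_coeff, if_pos hn, finsetSum_coeff]
  simp only [coeff_monomial]
  rw [Finset.sum_ite_eq']
  have hc : -(((-n).toNat : ℕ) : ℤ) = n := by omega
  split_ifs with h
  · rw [hc]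
  · rw [Finset.mem_range] at h
    exact (HahnSeries.coeff_eq_zero_of_lt_order (by omega)).symm

/-- If `|y| < q^{-deg g}`, then `|y g| < 1`. -/
theorem coeff_mul_toLS_eq_zero (F : Type) [Field F] (y : LaurentSeries F) (g : Polynomial F)
    (hy : ∀ m : ℤ, m ≤ g.natDegree → y.coeff m = 0) (n : ℤ) (hn : n ≤ 0) :
    (y * toLS F g).coeff n = 0 := by
  rw [HahnSeries.coeff_mul]
  refine Finset.sum_eq_zero fun ij hij => ?_
  rw [Finset.mem_antidiagonal] at hij
  obtain ⟨-, -, hsum⟩ := hij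
  by_cases h : ij.1 ≤ g.natDegree
  · rw [hy _ h, zero_mul]
  · have h0 : (toLS F g).coeff ij.2 = 0 := by
      rw [toLS_coeff, if_pos (by omega)]
      exact coeff_eq_zero_of_natDegree_lt (by omega)
    rw [h0, mul_zero]

/-- If `deg g` consecutive coefficients of `a / g` vanish just after position `k`, then
`g` divides `t^k a`. -/
theorem dvd_of_window_zero (F : Type) [Field F] (a g : Polynomial F) (hg : g ≠ 0) (k : ℕ)
    (h : ∀ m : ℤ, 1 ≤ m → m ≤ g.natDegree → (toLS F a / toLS F g).coeff (m + k) = 0) :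
    g ∣ X ^ k * a := by
  have hg' : toLS F g ≠ 0 := fun h0 => hg (toLS_eq_zero_of_coeff F g fun n _ => by simp [h0])
  set x := toLS F a / toLS F g with hx
  have hX : toLS F (X ^ k) = HahnSeries.single (-(k : ℤ)) 1 := by
    rw [X_pow_eq_monomial, toLS_monomial]
  obtain ⟨P, hP⟩ := exists_poly_part F (toLS F (X ^ k) * x)
  have hz : ∀ m : ℤ, (toLS F (X ^ k) * x).coeff m = x.coeff (m + k) := by
    intro m
    rw [hX, HahnSeries.coeff_single_mul, one_mul, sub_neg_eq_add]
  have hy : ∀ m : ℤ, m ≤ g.natDegree → (toLS F (X ^ k) * x - toLS F P).coeff m = 0 := by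
    intro m hm
    rw [HahnSeries.coeff_sub]
    rcases le_or_gt m 0 with h0 | h0
    · rw [hP m h0, sub_self]
    · rw [hz, h m (by omega) hm, toLS_coeff, if_neg (by omega), sub_zero]
  have hr : toLS F (X ^ k * a - P * g) = (toLS F (X ^ k) * x - toLS F P) * toLS F g := by
    rw [toLS_sub, toLS_mul, toLS_mul, sub_mul, mul_assoc, hx, div_mul_cancel₀ _ hg']
  have h0 : X ^ k * a - P * g = 0 := toLS_eq_zero_of_coeff F _ fun n hn => by
    rw [hr]; exact coeff_mul_toLS_eq_zero F _ g hy n hn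
  exact ⟨P, by rw [sub_eq_zero.mp h0, mul_comm]⟩

/-- In the Laurent expansion `a/g = ∑_{i<0} x_i t^i`, at least `⌊n/d⌋` of the
coefficients `x_{-1}, …, x_{-n}` are nonzero, where `d = deg g`. -/
theorem statement8 (F : Type) [Field F] [Fintype F]
    (a g : Polynomial F) (hco : IsCoprime a g)
    (hag : normT F (toLS F a) < normT F (toLS F g))
    (hgt : ¬∃ (cst : F) (k : ℕ), g = C cst * X ^ k)
    (d : ℕ) (hd : d = g.natDegree) (hd0 : 0 < d) (n : ℕ) (hn : 0 < n) :
    n / d ≤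
      ((Finset.Icc 1 n).filter fun i : ℕ =>
        coeffT F (toLS F a / toLS F g) (-(i : ℤ)) ≠ 0).card := by
  subst hd
  have hg : g ≠ 0 := by rintro rfl; simp at hd0
  have key : ∀ k : ℕ, ∃ i : ℕ, k + 1 ≤ i ∧ i ≤ k + g.natDegree ∧
      coeffT F (toLS F a / toLS F g) (-(i : ℤ)) ≠ 0 := by
    intro k
    by_contra! hk
    have hdvd : g ∣ X ^ k * a := by
      refine dvd_of_window_zero F a g hg k fun m h1 h2 => ?_
      have := hk (m + k).toNat (by omega) (by omega)
      rwa [coeffT, neg_neg, Int.toNat_of_nonneg (by omega)] at this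
    obtain ⟨j, -, hj⟩ := (dvd_prime_pow prime_X k).mp (hco.symm.dvd_of_dvd_mul_right hdvd)
    obtain ⟨u, hu⟩ := hj.symm
    obtain ⟨c, -, hc⟩ := isUnit_iff.mp u.isUnit
    exact hgt ⟨c, j, by rw [← hu, ← hc, mul_comm]⟩
  choose f hf1 hf2 hf3 using key
  rw [← Finset.card_range (n / g.natDegree)]
  refine Finset.card_le_card_of_injOn (fun j => f (j * g.natDegree)) ?_ ?_
  · intro j hj
    have hj' : j + 1 ≤ n / g.natDegree := by simpa using hj
    have h1 := (Nat.le_div_iff_mul_le hd0).mp hj'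
    rw [add_mul, one_mul] at h1
    have h2 := hf1 (j * g.natDegree)
    have h3 := hf2 (j * g.natDegree)
    simp only [Finset.coe_filter, Finset.mem_Icc, Set.mem_ofPred_eq]
    exact ⟨⟨by omega, by omega⟩, hf3 _⟩
  -- Injectivity: the block containing `i` is numbered `(i - 1) / d`.
  · have hinv : ∀ j : ℕ, (f (j * g.natDegree) - 1) / g.natDegree = j := by
      intro j
      have h2 := hf1 (j * g.natDegree)
      have h3 := hf2 (j * g.natDegree)
      exact Nat.div_eq_of_lt_le (by omega) (by rw [add_mul, one_mul]; omega)
    intro i _ j _ hij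
    have hij' : f (i * g.natDegree) = f (j * g.natDegree) := hij
    rw [← hinv i, ← hinv j, hij']

end
end

section
/- Let g ∈ 𝔽_q[t] be a polynomial with deg g ≥ 1. Then ∏_ω (1 − q^{−deg ω})^{−1} ≤ e·(1 + log(deg g)/log q), where the product runs over the distinct monic irreducible polynomials ω dividing g, e is Euler's number, and log is the natural logarithm. -/
/-!
Write `q` for the cardinality of `F`, `n = deg g`, `r = ⌊log_q n⌋`, and `ℓ(d) = -log (1 - q⁻ᵈ)`,
so that the logarithm of the product is the sum of `ℓ(deg ω)` over the monic irreducible divisors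
`ω` of `g`. Since `r ≤ log n / log q`, it suffices to bound this sum by `1 + log (r + 1)`.

Two facts control the sum: the degrees of the `ω` add up to at most `n`
(`sum_natDegree_le_of_dvd`), and for `d ≥ 2` the number `a_d` of those of degree `d` satisfies
`d * a_d ≤ q ^ d - q` (`card_deg_mul_add_le`), while `a_1 ≤ q`. As `ℓ(d) ≤ 1 / (q ^ d - 1)`, each
degree `2 ≤ d ≤ r` contributes at most `(1 / d) * (q ^ d - q) / (q ^ d - 1) < 1 / d`. A factor of
degree `d > r` contributes at most `d * λ` with `λ = 1 / ((r + 1) (q ^ (r + 1) - 1))`, and since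
`n < q ^ (r + 1)` all of these together contribute about `1 / (r + 1)`. The total is thus
essentially the harmonic sum `H_(r + 1) ≤ 1 + log (r + 1)`, apart from the excess `q ℓ(1) - 1` of
the linear factors. This excess is absorbed by `1 + log (r + 1) - H_(r + 1)`, which increases
with `r`, together with the savings from `q ^ d - q` and from the degree used up by the linear
factors (`total_le`). For `r = 0` the bound `n / (q - 1) ≤ 1` is immediate.
-/


/- Setting: `F` is the finite field `𝔽_q` with `q = Fintype.card F` elements.
The field `𝔽_q((1/t))` of formal Laurent series in `1/t` is modelled by
`LaurentSeries F = HahnSeries ℤ F`, where the element `t` corresponds to the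
Hahn series supported at `-1`; thus the coefficient `x_i` of `t^i` in
`x ∈ 𝔽_q((1/t))` is the Hahn series coefficient of `x` at `-i`. -/

open Polynomial

noncomputable section

attribute [local instance] Classical.propDecidable

variable (F : Type) [Field F] [Fintype F]

/-! ### Counting monic irreducible divisors -/

/-- Distinct monic irreducibles are pairwise coprime, so their product divides any common
multiple `h`. -/
theorem sum_natDegree_le_of_dvd {F : Type} [Field F] (S : Finset F[X]) {h : F[X]} (hh : h ≠ 0)
    (hS : ∀ ω ∈ S, ω.Monic ∧ Irreducible ω ∧ ω ∣ h) :
    ∑ ω ∈ S, ω.natDegree ≤ h.natDegree := by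
  classical
  rw [← natDegree_prod_of_monic _ _ fun ω hω => (hS ω hω).1]
  refine natDegree_le_of_dvd (Finset.prod_dvd_of_coprime ?_ fun ω hω => (hS ω hω).2.2) hh
  intro a ha b hb hab
  refine ((hS a ha).2.1.coprime_iff_not_dvd).2 fun hd => hab ?_
  exact eq_of_monic_of_associated (hS a ha).1 (hS b hb).1
    (((hS a ha).2.1.dvd_irreducible_iff_associated (hS b hb).2.1).1 hd)

theorem card_deg_one_le {F : Type} [Field F] [Fintype F] (S : Finset F[X])
    (hS : ∀ ω ∈ S, ω.Monic ∧ ω.natDegree = 1) : S.card ≤ Fintype.card F := by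
  refine Finset.card_le_card_of_injOn (t := Finset.univ) (fun ω => ω.coeff 0) (by simp) ?_
  intro a ha b hb hab
  have h : ∀ ω ∈ S, ω = X + C (ω.coeff 0) := fun ω hω => (hS ω hω).1.eq_X_add_C (hS ω hω).2
  rw [h a ha, h b hb]
  simp only at hab
  rw [hab]

/-- The irreducibles of degree `d ≥ 2` in `S` and the `q` polynomials `X - a` all divide
`X ^ q ^ d - X`. Removing the linear factors from the count is what makes the contribution of
degree `d` to the logarithm of the product smaller than `1 / d`. -/
theorem card_deg_mul_add_le {F : Type} [Field F] [Fintype F] (S : Finset F[X]) {d : ℕ}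
    (hd : 2 ≤ d) (hS : ∀ ω ∈ S, ω.Monic ∧ Irreducible ω ∧ ω.natDegree = d) :
    d * S.card + Fintype.card F ≤ Fintype.card F ^ d := by
  classical
  have hq : 1 < Fintype.card F := Fintype.one_lt_card
  set L : Finset F[X] := Finset.univ.image fun a : F => X - C a with hL
  have hLdeg : ∀ ω ∈ L, ω.Monic ∧ Irreducible ω ∧ ω.natDegree = 1 := by
    intro ω hω
    obtain ⟨a, -, rfl⟩ := Finset.mem_image.1 hω
    exact ⟨monic_X_sub_C a, irreducible_X_sub_C a, natDegree_X_sub_C a⟩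
  have hLcard : L.card = Fintype.card F := by
    rw [hL, Finset.card_image_of_injective _ (fun a b hab => by simpa using hab), Finset.card_univ]
  have hdisj : Disjoint S L := by
    rw [Finset.disjoint_left]
    intro ω h1 h2
    have := (hS ω h1).2.2
    have := (hLdeg ω h2).2.2
    omega
  have key := sum_natDegree_le_of_dvd (S ∪ L)
    (FiniteField.X_pow_card_pow_sub_X_ne_zero F (p := Fintype.card F) (n := d) (by omega) hq) (by
      intro ω hω
      have hdvd : ω.Monic ∧ Irreducible ω ∧ ω.natDegree ∣ d := by
        rcases Finset.mem_union.1 hω with h | h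
        · exact ⟨(hS ω h).1, (hS ω h).2.1, (hS ω h).2.2 ▸ dvd_rfl⟩
        · exact ⟨(hLdeg ω h).1, (hLdeg ω h).2.1, (hLdeg ω h).2.2 ▸ one_dvd d⟩
      refine ⟨hdvd.1, hdvd.2.1, ?_⟩
      rw [← Nat.card_eq_fintype_card]
      exact hdvd.2.1.natDegree_dvd_iff_dvd_X_pow_card_pow_sub_X.1 hdvd.2.2)
  rw [FiniteField.X_pow_card_pow_sub_X_natDegree_eq F (by omega) hq, Finset.sum_union hdisj,
    Finset.sum_congr rfl fun ω hω => (hS ω hω).2.2,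
    Finset.sum_congr rfl fun ω hω => (hLdeg ω hω).2.2] at key
  simp only [Finset.sum_const, smul_eq_mul, hLcard, mul_one] at key
  linarith [mul_comm d S.card]

/-! ### Numerical estimates -/

theorem neg_log_one_sub_inv_le {y : ℝ} (hy : 1 < y) : -Real.log (1 - y⁻¹) ≤ 1 / (y - 1) := by
  have h0 : 0 < y - 1 := by linarith
  have h1 : 1 - y⁻¹ = (y / (y - 1))⁻¹ := by field_simp
  rw [h1, Real.log_inv, neg_neg]
  refine (Real.log_le_sub_one_of_pos (by positivity)).trans (le_of_eq ?_)
  field_simp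
  ring

/-- This is `log x ≤ sinh (log x) = (x - x⁻¹) / 2` at `x = y / (y - 1)`. -/
theorem mul_neg_log_one_sub_inv_le {y : ℝ} (hy : 1 < y) :
    y * -Real.log (1 - y⁻¹) ≤ 1 + 1 / (2 * (y - 1)) := by
  have h0 : 0 < y - 1 := by linarith
  have h1 : 1 - y⁻¹ = (y / (y - 1))⁻¹ := by field_simp
  rw [h1, Real.log_inv, neg_neg]
  have hp : 0 < y / (y - 1) := by positivity
  have h2 : Real.log (y / (y - 1)) ≤ Real.sinh (Real.log (y / (y - 1))) :=
    Real.self_le_sinh_iff.2 (Real.log_nonneg (by rw [le_div_iff₀ h0]; linarith))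
  rw [Real.sinh_log hp] at h2
  calc y * Real.log (y / (y - 1)) ≤ y * ((y / (y - 1) - (y / (y - 1))⁻¹) / 2) := by gcongr
    _ = _ := by field_simp; ring

/-- Equivalent to `log (4 / 3) ≤ 8 / 21`, which follows from `log (4 / 3) ≤ 1 / 3`. -/
theorem base_two : 2 * Real.log 2 + 1 / 3 + 2 / 7 ≤ 1 + Real.log 3 := by
  have := Real.log_le_sub_one_of_pos (x := 4 / 3) (by norm_num)
  rw [Real.log_div (by norm_num) (by norm_num), show (4 : ℝ) = 2 ^ 2 by norm_num,
    Real.log_pow] at this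
  norm_num at this
  linarith

/-- Each term of the sum is at most `1 / k ≤ log k - log (k - 1)`, so the bound propagates from
`r₀` to every larger `r`. -/
theorem sum_step (y : ℝ) (hy : 1 < y) (c : ℝ) (r₀ r : ℕ) (hr : r₀ ≤ r)
    (h : c + ∑ k ∈ Finset.Icc 2 (r₀ + 1), 1 / (k : ℝ) * ((y ^ k - y) / (y ^ k - 1)) ≤
      1 + Real.log ((r₀ : ℝ) + 1)) :
    c + ∑ k ∈ Finset.Icc 2 (r + 1), 1 / (k : ℝ) * ((y ^ k - y) / (y ^ k - 1)) ≤
      1 + Real.log ((r : ℝ) + 1) := by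
  induction r, hr using Nat.le_induction with
  | base => exact h
  | succ r hr ih =>
    rw [Finset.sum_Icc_succ_top (by omega)]
    have hp : 1 < y ^ (r + 1 + 1) := one_lt_pow₀ hy (by omega)
    have h1 : (y ^ (r + 1 + 1) - y) / (y ^ (r + 1 + 1) - 1) ≤ 1 := by
      rw [div_le_one (by linarith)]; linarith
    have h2 : 1 / ((r + 1 + 1 : ℕ) : ℝ) * ((y ^ (r + 1 + 1) - y) / (y ^ (r + 1 + 1) - 1)) ≤
        1 / ((r + 1 + 1 : ℕ) : ℝ) := mul_le_of_le_one_right (by positivity) h1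
    have h3 : 1 / ((r + 1 + 1 : ℕ) : ℝ) ≤ Real.log ((r : ℝ) + 1 + 1) - Real.log ((r : ℝ) + 1) := by
      have := Real.one_sub_inv_le_log_of_pos (x := ((r : ℝ) + 1 + 1) / (r + 1)) (by positivity)
      rw [Real.log_div (by positivity) (by positivity)] at this
      refine le_trans (le_of_eq ?_) this
      push_cast
      field_simp
      ring
    push_cast at h2 h3 ⊢
    linarith

/-- The numerical estimate for the bound obtained in `sum_neg_log_le`: the first term comes from
the linear factors, the sum from the degrees `2, …, r`, the last term from the degrees above `r`. -/
theorem total_le (q r n : ℕ) (hq : 2 ≤ q) (hr : 1 ≤ r) (hn : n < q ^ (r + 1)) :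
    (q : ℝ) * -Real.log (1 - (q : ℝ)⁻¹) +
      ∑ k ∈ Finset.Icc 2 r, 1 / (k : ℝ) * (((q : ℝ) ^ k - q) / ((q : ℝ) ^ k - 1)) +
      1 / (((r : ℝ) + 1) * ((q : ℝ) ^ (r + 1) - 1)) * (n - q) ≤ 1 + Real.log ((r : ℝ) + 1) := by
  have hq1 : (1 : ℝ) < q := by exact_mod_cast hq
  have hp : 1 < (q : ℝ) ^ (r + 1) := one_lt_pow₀ hq1 (by omega)
  have hp0 : 0 < (q : ℝ) ^ (r + 1) - 1 := by linarith
  have hn' : (n : ℝ) ≤ (q : ℝ) ^ (r + 1) - 1 := by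
    have : ((n + 1 : ℕ) : ℝ) ≤ ((q ^ (r + 1) : ℕ) : ℝ) := by exact_mod_cast hn
    push_cast at this; linarith
  have hlog2 : (2 : ℝ) * -Real.log (1 - (2 : ℝ)⁻¹) = 2 * Real.log 2 := by
    rw [show (1 : ℝ) - 2⁻¹ = 2⁻¹ by norm_num, Real.log_inv]; ring
  -- For `q = 2`, `r = 1` the last term cannot be relaxed to `n = q ^ (r + 1)`; its exact bound
  -- `1 / 6` at `n = 3` is needed. In all other cases it becomes the term `k = r + 1` of the sum.
  by_cases hcase : q = 2 ∧ r = 1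
  · obtain ⟨rfl, rfl⟩ := hcase
    have := Real.log_two_lt_d9
    norm_num at hn' hlog2 ⊢
    have hn3 : (n : ℝ) ≤ 3 := by exact_mod_cast hn'
    linarith
  · have hlast : 1 / (((r : ℝ) + 1) * ((q : ℝ) ^ (r + 1) - 1)) * (n - q) ≤
        1 / ((r + 1 : ℕ) : ℝ) * (((q : ℝ) ^ (r + 1) - q) / ((q : ℝ) ^ (r + 1) - 1)) := by
      calc _ ≤ 1 / (((r : ℝ) + 1) * ((q : ℝ) ^ (r + 1) - 1)) * ((q : ℝ) ^ (r + 1) - q) := by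
            gcongr; linarith
        _ = _ := by push_cast; field_simp
    refine le_trans (add_le_add_right hlast _) ?_
    rw [add_assoc, ← Finset.sum_Icc_succ_top (by omega)]
    by_cases h2 : q = 2
    · refine sum_step q hq1 _ 2 r (by omega) ?_
      subst h2
      have := base_two
      norm_num [Finset.sum_Icc_succ_top] at hlog2 ⊢
      linarith
    · refine sum_step q hq1 _ 1 r hr ?_
      have hq3 : (3 : ℝ) ≤ q := by exact_mod_cast (by omega : 3 ≤ q)
      have h1 := mul_neg_log_one_sub_inv_le hq1
      have h3 := Real.log_two_gt_d9
      have h4 : 1 / (2 * ((q : ℝ) - 1)) + 1 / 2 * (((q : ℝ) ^ 2 - q) / ((q : ℝ) ^ 2 - 1)) ≤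
          5 / 8 := by
        have e : 1 / (2 * ((q : ℝ) - 1)) + 1 / 2 * (((q : ℝ) ^ 2 - q) / ((q : ℝ) ^ 2 - 1)) =
            1 / 2 + 1 / ((q : ℝ) ^ 2 - 1) := by
          have : (q : ℝ) - 1 ≠ 0 := by linarith
          have : (q : ℝ) + 1 ≠ 0 := by linarith
          rw [show (q : ℝ) ^ 2 - 1 = (q - 1) * (q + 1) by ring]
          field_simp
          ring
        rw [e]
        have : 1 / ((q : ℝ) ^ 2 - 1) ≤ 1 / 8 := by
          apply one_div_le_one_div_of_le (by norm_num); nlinarith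
        linarith
      have e1 : (1 : ℝ) + 1 = 2 := by norm_num
      simp only [Nat.reduceAdd, Finset.Icc_self, Finset.sum_singleton, Nat.cast_one, e1,
        Nat.cast_ofNat]
      linarith

/-! ### The logarithm of the product -/

/-- The case `deg g < q`, where a factor costs at most `1 / (q - 1)` per unit of degree. -/
theorem sum_neg_log_le_of_card_gt {F : Type} [Field F] [Fintype F] {g : F[X]} {S : Finset F[X]}
    (hg : g ≠ 0) (hS : ∀ ω ∈ S, ω.Monic ∧ Irreducible ω ∧ ω ∣ g)
    (hn : g.natDegree < Fintype.card F) :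
    ∑ ω ∈ S, -Real.log (1 - ((Fintype.card F : ℝ) ^ ω.natDegree)⁻¹) ≤ 1 := by
  set Q : ℝ := (Fintype.card F : ℝ) with hQ
  have hQ1 : 1 < Q := by rw [hQ]; exact_mod_cast Fintype.one_lt_card
  have hQ0 : 0 < Q - 1 := by linarith
  have hpt : ∀ ω ∈ S, -Real.log (1 - (Q ^ ω.natDegree)⁻¹) ≤ 1 / (Q - 1) * ω.natDegree := by
    intro ω hω
    have hd := (hS ω hω).2.1.natDegree_pos
    have hpow : Q ≤ Q ^ ω.natDegree := le_self_pow₀ hQ1.le hd.ne'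
    refine (neg_log_one_sub_inv_le (hQ1.trans_le hpow)).trans ?_
    calc 1 / (Q ^ ω.natDegree - 1) ≤ 1 / (Q - 1) := by gcongr
      _ ≤ _ := le_mul_of_one_le_right (by positivity) (by exact_mod_cast hd)
  refine (Finset.sum_le_sum hpt).trans ?_
  rw [← Finset.mul_sum, ← Nat.cast_sum, one_div_mul_eq_div, div_le_one hQ0]
  have h1 := sum_natDegree_le_of_dvd S hg hS
  have : ((∑ ω ∈ S, ω.natDegree + 1 : ℕ) : ℝ) ≤ Q := by rw [hQ]; exact_mod_cast h1.trans_lt hn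
  push_cast at this ⊢
  linarith

/-- The bound for any `r ≥ 1` with `deg g < q ^ (r + 1)`; the case `r = ⌊log_q (deg g)⌋` is the
one of interest. -/
theorem sum_neg_log_le {F : Type} [Field F] [Fintype F] {g : F[X]} {S : Finset F[X]} {r : ℕ}
    (hg : g ≠ 0) (hS : ∀ ω ∈ S, ω.Monic ∧ Irreducible ω ∧ ω ∣ g) (hr : 1 ≤ r)
    (hn : g.natDegree < Fintype.card F ^ (r + 1)) :
    ∑ ω ∈ S, -Real.log (1 - ((Fintype.card F : ℝ) ^ ω.natDegree)⁻¹) ≤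
      1 + Real.log ((r : ℝ) + 1) := by
  refine le_trans ?_ (total_le (Fintype.card F) r g.natDegree Fintype.one_lt_card hr hn)
  set Q : ℝ := (Fintype.card F : ℝ) with hQ
  have hQ1 : 1 < Q := by rw [hQ]; exact_mod_cast Fintype.one_lt_card
  have hQ0 : 0 < Q - 1 := by linarith
  have hp : Q ≤ Q ^ (r + 1) := le_self_pow₀ hQ1.le (by omega)
  have hp0 : 0 < Q ^ (r + 1) - 1 := by linarith
  -- `l` is an upper bound for the contribution, per unit of degree, of a factor of degree above
  -- `r`. The linear factors are charged `l` per unit of degree too, plus an excess, so that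
  -- they use up part of the total degree `n`.
  set l : ℝ := 1 / (((r : ℝ) + 1) * (Q ^ (r + 1) - 1)) with hl
  have hl0 : 0 ≤ l := by positivity
  have hl1 : l ≤ -Real.log (1 - Q⁻¹) := by
    have h1 : l ≤ 1 / Q := by
      rw [hl]
      apply one_div_le_one_div_of_le (by linarith)
      have hr1 : (1 : ℝ) ≤ r := by exact_mod_cast hr
      have : Q * Q ≤ Q ^ (r + 1) := by
        rw [← pow_two]; exact pow_le_pow_right₀ hQ1.le (by omega)
      have hQ2 : 2 ≤ Q := by rw [hQ]; exact_mod_cast Fintype.one_lt_card (α := F)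
      have h3 : 2 * (Q ^ (r + 1) - 1) ≤ ((r : ℝ) + 1) * (Q ^ (r + 1) - 1) :=
        mul_le_mul_of_nonneg_right (by linarith) hp0.le
      nlinarith
    have h2 : Real.log (1 - Q⁻¹) ≤ (1 - Q⁻¹) - 1 :=
      Real.log_le_sub_one_of_pos (by have := inv_lt_one_of_one_lt₀ hQ1; linarith)
    rw [one_div] at h1
    linarith
  have hpt : ∀ ω ∈ S, -Real.log (1 - (Q ^ ω.natDegree)⁻¹) ≤
      l * ω.natDegree + (if ω.natDegree = 1 then -Real.log (1 - Q⁻¹) - l else 0) +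
        ∑ k ∈ Finset.Icc 2 r, if ω.natDegree = k then 1 / (Q ^ k - 1) else 0 := by
    intro ω hω
    have hd := (hS ω hω).2.1.natDegree_pos
    generalize ω.natDegree = d at hd
    rw [Finset.sum_ite_eq]
    have hpow : Q ≤ Q ^ d := le_self_pow₀ hQ1.le hd.ne'
    have hlog := neg_log_one_sub_inv_le (hQ1.trans_le hpow)
    have hld : 0 ≤ l * d := by positivity
    rcases Nat.lt_or_ge r d with h | h
    · rw [if_neg (by omega), if_neg (by simp; omega), add_zero, add_zero]
      refine hlog.trans ?_
      have hdr : (r : ℝ) + 1 ≤ d := by exact_mod_cast h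
      have hpd : Q ^ (r + 1) ≤ Q ^ d := pow_le_pow_right₀ hQ1.le h
      calc 1 / (Q ^ d - 1) ≤ 1 / (Q ^ (r + 1) - 1) := by gcongr
        _ = l * ((r : ℝ) + 1) := by rw [hl]; field_simp
        _ ≤ l * d := by gcongr
    · rcases Nat.lt_or_ge 1 d with h1 | h1
      · rw [if_neg (by omega), if_pos (by simp; omega)]
        linarith
      · obtain rfl : d = 1 := by omega
        rw [if_pos rfl, if_neg (by simp)]
        simp
  refine (Finset.sum_le_sum hpt).trans ?_
  rw [Finset.sum_add_distrib, Finset.sum_add_distrib, ← Finset.mul_sum, ← Nat.cast_sum,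
    Finset.sum_comm]
  simp only [← Finset.sum_filter, Finset.sum_const, nsmul_eq_mul]
  -- The number of linear factors is at most `q`, so the terms in `l` add up to `l * (n - q)`.
  have hA : ((∑ ω ∈ S, ω.natDegree : ℕ) : ℝ) ≤ g.natDegree := by
    exact_mod_cast sum_natDegree_le_of_dvd S hg hS
  have hB : ((S.filter fun ω => ω.natDegree = 1).card : ℝ) ≤ Q := by
    rw [hQ]
    refine Nat.cast_le.2 (card_deg_one_le _ fun ω hω => ?_)
    rw [Finset.mem_filter] at hω
    exact ⟨(hS ω hω.1).1, hω.2⟩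
  have hC : ∑ k ∈ Finset.Icc 2 r, ((S.filter fun ω => ω.natDegree = k).card : ℝ) *
      (1 / (Q ^ k - 1)) ≤ ∑ k ∈ Finset.Icc 2 r, 1 / (k : ℝ) * ((Q ^ k - Q) / (Q ^ k - 1)) := by
    refine Finset.sum_le_sum fun k hk => ?_
    have hk2 : 2 ≤ k := (Finset.mem_Icc.1 hk).1
    have h1 := card_deg_mul_add_le (S.filter fun ω => ω.natDegree = k) hk2 fun ω hω => by
      rw [Finset.mem_filter] at hω
      exact ⟨(hS ω hω.1).1, (hS ω hω.1).2.1, hω.2⟩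
    have h2 : (k : ℝ) * ((S.filter fun ω => ω.natDegree = k).card : ℝ) + Q ≤ Q ^ k := by
      rw [hQ]; exact_mod_cast h1
    have hk0 : (0 : ℝ) < k := by positivity
    have hpk : 0 < Q ^ k - 1 := by linarith [one_lt_pow₀ hQ1 (by omega : k ≠ 0)]
    rw [one_div_mul_eq_div, div_div, mul_one_div, div_le_div_iff₀ hpk (by positivity)]
    nlinarith
  have h1 := mul_le_mul_of_nonneg_left hA hl0
  have h2 := mul_le_mul_of_nonneg_right hB (sub_nonneg.2 hl1)
  linarith

/-- **Lemma 5**: `∏_{ω | g} (1 - q^{-deg ω})⁻¹ ≤ e·(1 + log_q(deg g))`, the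
product over distinct monic irreducible divisors of `g`. -/
theorem statement11 (F : Type) [Field F] [Fintype F]
    (g : Polynomial F) (hg : 1 ≤ g.natDegree) :
    (∏ᶠ (ω : Polynomial F) (_ : ω.Monic ∧ Irreducible ω ∧ ω ∣ g),
        (1 - (Fintype.card F : ℝ) ^ (-(ω.natDegree : ℤ)))⁻¹) ≤
      Real.exp 1 * (1 + Real.log g.natDegree / Real.log (Fintype.card F)) := by
  classical
  have hg0 : g ≠ 0 := by rintro rfl; simp at hg
  have hq : 1 < Fintype.card F := Fintype.one_lt_card
  have hQ1 : (1 : ℝ) < Fintype.card F := by exact_mod_cast hq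
  obtain ⟨S, hS⟩ : ∃ S : Finset F[X], ∀ ω, ω ∈ S ↔ ω.Monic ∧ Irreducible ω ∧ ω ∣ g := by
    refine ⟨(UniqueFactorizationMonoid.normalizedFactors g).toFinset, fun ω => ?_⟩
    rw [Multiset.mem_toFinset, UniqueFactorizationMonoid.mem_normalizedFactors_iff' hg0]
    constructor
    · rintro ⟨h1, h2, h3⟩
      exact ⟨h2 ▸ monic_normalize h1.ne_zero, h1, h3⟩
    · rintro ⟨h1, h2, h3⟩
      exact ⟨h2, h1.normalize_eq_self, h3⟩
  have hS' : ∀ ω ∈ S, ω.Monic ∧ Irreducible ω ∧ ω ∣ g := fun ω => (hS ω).1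
  rw [finprod_cond_eq_prod_of_cond_iff (t := S) _ fun {ω} _ => (hS ω).symm]
  have hprod : ∏ ω ∈ S, (1 - (Fintype.card F : ℝ) ^ (-(ω.natDegree : ℤ)))⁻¹ =
      Real.exp (∑ ω ∈ S, -Real.log (1 - ((Fintype.card F : ℝ) ^ ω.natDegree)⁻¹)) := by
    rw [Real.exp_sum]
    refine Finset.prod_congr rfl fun ω hω => ?_
    have hpow := one_lt_pow₀ hQ1 (hS' ω hω).2.1.natDegree_pos.ne'
    have hinv := inv_lt_one_of_one_lt₀ hpow
    rw [Real.exp_neg, Real.exp_log (by linarith), zpow_neg, zpow_natCast]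
  rw [hprod]
  set r : ℕ := Nat.log (Fintype.card F) g.natDegree with hr
  have hlt : g.natDegree < Fintype.card F ^ (r + 1) := Nat.lt_pow_succ_log_self hq _
  have hle : Fintype.card F ^ r ≤ g.natDegree := Nat.pow_log_le_self _ (by omega)
  have hsum : ∑ ω ∈ S, -Real.log (1 - ((Fintype.card F : ℝ) ^ ω.natDegree)⁻¹) ≤
      1 + Real.log ((r : ℝ) + 1) := by
    rcases Nat.eq_zero_or_pos r with h0 | h0
    · rw [h0] at hlt ⊢
      simpa using sum_neg_log_le_of_card_gt hg0 hS' (by simpa using hlt)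
    · exact sum_neg_log_le hg0 hS' h0 hlt
  have hrL : (r : ℝ) ≤ Real.log g.natDegree / Real.log (Fintype.card F) := by
    rw [le_div_iff₀ (Real.log_pos hQ1), ← Real.log_pow]
    exact Real.log_le_log (by positivity) (by exact_mod_cast hle)
  calc _ ≤ Real.exp (1 + Real.log ((r : ℝ) + 1)) := Real.exp_le_exp.2 hsum
    _ = Real.exp 1 * ((r : ℝ) + 1) := by rw [Real.exp_add, Real.exp_log (by positivity)]
    _ ≤ _ := mul_le_mul_of_nonneg_left (by linarith) (Real.exp_pos 1).le

end
end

section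
/- For every prime p ≥ 3, ∑_{r=1}^{p−1} 1/sin(πr/p) < p·log p, where log is the natural logarithm. -/
/-!
Since `sin (π r / p)` is invariant under `r ↦ p - r`, for `p = 2 m + 1` the sum is twice the sum over
`1 ≤ r ≤ m`. There `0 < π r / p < π / 2`, so Jordan's inequality `2 / π * x < sin x`
(`Real.mul_lt_sin`) bounds each term strictly by `p / (2 r)`, and the whole sum is less than `p * H_m`
with `H_m` the harmonic number. Finally `H_m ≤ log (2 m + 1)` by telescoping
`1 / r ≤ log ((2 r + 1) / (2 r - 1))`, an instance of `2 x / (x + 2) ≤ log (1 + x)`.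
-/

/- Setting: `ZMod p` is the field `𝔽_p` with `p` elements (for `p` prime).
The field `𝔽_p((1/t))` of formal Laurent series in `1/t` is modelled by
`LaurentSeries (ZMod p) = HahnSeries ℤ (ZMod p)`, where the element `t`
corresponds to the Hahn series supported at `-1`; thus the coefficient `x_i` of
`t^i` in `x ∈ 𝔽_p((1/t))` is the Hahn series coefficient of `x` at `-i`. -/

open Polynomial

noncomputable section

attribute [local instance] Classical.propDecidable

/-- `ψ(a) = exp(2πi·a/p)`, with `a` identified with its integer representative. -/
def psiP (p : ℕ) (a : ZMod p) : ℂ :=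
  Complex.exp (2 * Real.pi * Complex.I * (a.val : ℂ) / (p : ℂ))

variable (p : ℕ) [Fact p.Prime]

/-- The element `t` of `𝔽_p((1/t))`. -/
def tP : LaurentSeries (ZMod p) := HahnSeries.single (-1 : ℤ) 1

/-- Laurent expansion (at infinity) of a polynomial in `t`. -/
def toLSP (f : Polynomial (ZMod p)) : LaurentSeries (ZMod p) :=
  Polynomial.eval₂ (algebraMap (ZMod p) (LaurentSeries (ZMod p))) (tP p) f

/-- The coefficient `x_i` of `t^i` in `x ∈ 𝔽_p((1/t))`. -/
def coeffTP (x : LaurentSeries (ZMod p)) (i : ℤ) : ZMod p := x.coeff (-i)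

/-- `e_p(x) = ψ(x_{-1})`. -/
def eP (x : LaurentSeries (ZMod p)) : ℂ := psiP p (coeffTP p x (-1))

/-- `|x| = p^j` where `j` is the largest index with `x_j ≠ 0`, and `|0| = 0`. -/
def normTP (x : LaurentSeries (ZMod p)) : ℝ :=
  if x = 0 then 0 else (p : ℝ) ^ (-x.order)

/-- The set `{r, r+1, …, r+s-1}` of `s` consecutive elements of `𝔽_p`. -/
def consec (r : ZMod p) (s : ℕ) : Finset (ZMod p) :=
  (Finset.range s).image fun k => r + (k : ZMod p)

/-- `M_R(n)`: monic polynomials of degree `n` whose coefficients of degrees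
`0, …, n-1` all lie outside `R`. -/
def MRP (R : Finset (ZMod p)) (n : ℕ) : Finset (Polynomial (ZMod p)) :=
  ((Finset.univ : Finset (Fin n → ZMod p)).filter fun c => ∀ i, c i ∉ R).image
    fun c => X ^ n + ∑ i : Fin n, C (c i) * X ^ (i : ℕ)

/-- `S_R(x) = ∑_{m ∈ M_R(n)} e_p(m x)`. -/
def SRP (R : Finset (ZMod p)) (n : ℕ) (x : LaurentSeries (ZMod p)) : ℂ :=
  ∑ m ∈ MRP p R n, eP p (toLSP p m * x)

/-- The Fourier coefficient `1̂_A(r) = ∑_{a ∈ A} ψ(a r)`. -/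
def fhatP (A : Finset (ZMod p)) (r : ZMod p) : ℂ := ∑ a ∈ A, psiP p (a * r)

/-- The logarithm bound behind the final estimate: each term satisfies
`1 / r ≤ log (2 r + 1) - log (2 r - 1)`. -/
theorem sum_inv_le_log (m : ℕ) :
    ∑ r ∈ Finset.Ico 1 (m + 1), 1 / (r : ℝ) ≤ Real.log (2 * m + 1) := by
  induction m with
  | zero => simp
  | succ k ih =>
    rw [Finset.sum_Ico_succ_top (by omega)]
    have hk : (0 : ℝ) < 2 * k + 1 := by positivity
    have h := Real.le_log_one_add_of_nonneg (x := 2 / (2 * (k : ℝ) + 1)) (by positivity)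
    have e1 : 2 * (2 / (2 * (k : ℝ) + 1)) / (2 / (2 * (k : ℝ) + 1) + 2) = 1 / ((k : ℝ) + 1) := by
      field_simp
      ring
    have e2 : 1 + 2 / (2 * (k : ℝ) + 1) = (2 * ((k : ℝ) + 1) + 1) / (2 * k + 1) := by
      field_simp
      ring
    rw [e1, e2, Real.log_div (by positivity) hk.ne'] at h
    push_cast
    linarith

theorem one_div_sin_lt (m r : ℕ) (hr : 1 ≤ r) (hrm : r ≤ m) :
    1 / Real.sin (Real.pi * r / (2 * m + 1 : ℕ)) < (2 * m + 1 : ℕ) / 2 * (1 / (r : ℝ)) := by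
  have hp : (0 : ℝ) < (2 * m + 1 : ℕ) := by positivity
  have hr0 : (0 : ℝ) < r := by exact_mod_cast hr
  have hlt : (2 * r : ℝ) < (2 * m + 1 : ℕ) := by exact_mod_cast (by omega : 2 * r < 2 * m + 1)
  have hx : Real.pi * r / (2 * m + 1 : ℕ) < Real.pi / 2 := by
    rw [div_lt_div_iff₀ hp two_pos]
    nlinarith [Real.pi_pos]
  have h := Real.mul_lt_sin (x := Real.pi * r / (2 * m + 1 : ℕ)) (by positivity) hx
  have e : 2 / Real.pi * (Real.pi * r / (2 * m + 1 : ℕ)) = 2 * r / (2 * m + 1 : ℕ) := by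
    field_simp
  rw [e] at h
  calc _ < 1 / (2 * r / (2 * m + 1 : ℕ) : ℝ) := one_div_lt_one_div_of_lt (by positivity) h
    _ = _ := by field_simp

/-- Folding the sum along the symmetry `r ↦ p - r`. -/
theorem sum_one_div_sin_eq (m : ℕ) :
    ∑ r ∈ Finset.Ico 1 (2 * m + 1), 1 / Real.sin (Real.pi * r / (2 * m + 1 : ℕ)) =
      2 * ∑ r ∈ Finset.Ico 1 (m + 1), 1 / Real.sin (Real.pi * r / (2 * m + 1 : ℕ)) := by
  have hp : ((2 * m + 1 : ℕ) : ℝ) ≠ 0 := by positivity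
  rw [← Finset.sum_Ico_consecutive _ (show 1 ≤ m + 1 by omega) (show m + 1 ≤ 2 * m + 1 by omega),
    two_mul (∑ r ∈ Finset.Ico 1 (m + 1), _)]
  congr 1
  have h := Finset.sum_Ico_reflect
    (fun r : ℕ => 1 / Real.sin (Real.pi * r / (2 * m + 1 : ℕ))) 1
    (show m + 1 ≤ (2 * m + 1) + 1 by omega)
  rw [show 2 * m + 1 + 1 - (m + 1) = m + 1 by omega, Nat.add_sub_cancel] at h
  rw [← h]
  refine Finset.sum_congr rfl fun r hr => ?_
  have hr' := Finset.mem_Ico.mp hr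
  rw [Nat.cast_sub (by omega), mul_sub, sub_div, mul_div_cancel_right₀ _ hp, Real.sin_pi_sub]

/-- `∑_{r=1}^{p-1} 1/sin(πr/p) < p·log p` for every prime `p ≥ 3`. -/
theorem statement13 (p : ℕ) (hp : p.Prime) (h3 : 3 ≤ p) :
    ∑ r ∈ Finset.Ico 1 p, 1 / Real.sin (Real.pi * r / p) < p * Real.log p := by
  obtain ⟨m, rfl⟩ := hp.odd_of_ne_two (by omega)
  have hpos : (0 : ℝ) < (2 * m + 1 : ℕ) := by positivity
  have h1 : ∑ r ∈ Finset.Ico 1 (m + 1), 1 / Real.sin (Real.pi * r / (2 * m + 1 : ℕ)) <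
      ∑ r ∈ Finset.Ico 1 (m + 1), (2 * m + 1 : ℕ) / 2 * (1 / (r : ℝ)) := by
    refine Finset.sum_lt_sum_of_nonempty (Finset.nonempty_Ico.mpr (by omega)) fun r hr => ?_
    have hr' := Finset.mem_Ico.mp hr
    exact one_div_sin_lt m r hr'.1 (by omega)
  rw [← Finset.mul_sum] at h1
  have h2 := mul_le_mul_of_nonneg_left (sum_inv_le_log m) hpos.le
  have e : (2 * (m : ℝ) + 1) = (2 * m + 1 : ℕ) := by push_cast; rfl
  rw [e] at h2
  rw [sum_one_div_sin_eq]
  linarith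

end
end
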